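/- Let μ be a singular cardinal with cf(μ) = κ. If 𝔞_κ ≤ μ, then every cardinal in the interval [𝔞_κ, μ] belongs to MAD(μ). -/

import Mathlib

/-!
Blow up the points of a `cf μ`-mad family to blocks whose sizes are cofinal in `μ`. A set `C` of
size `μ` meets blocks in arbitrarily large sizes, hence meets `cf μ` of them in sizes cofinal in
`μ`; maximality applied to the indices of these blocks yields a member of the blown-up family that
meets `C` in size `μ`. So `MAD(cf μ) ⊆ MAD(μ)`.

To raise a size `a ∈ MAD(μ)` to some `c` with `a ≤ c ≤ μ`, split a set of size `μ` into fibres of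
size `μ` along a well-order of size `c` with a greatest element. A set `C` of size `μ` has a least
level `δ` up to which it has `μ` points. Either `C` meets the fibre at `δ` in size `μ`, or `C` has
`μ` points below `δ` and fewer than `μ` below any smaller bound; since `μ` is singular, the latter
forces `cf δ = cf μ`. A cofinal `cf μ`-sequence then groups the fibres below `δ` into `cf μ` columns
of size `μ`. Some `μ`-mad family of size `a` has `cf μ` members that, up to small sets, are these
columns, and its remaining members catch every such `C`. Fibres and remaining members over all `δ`
form a maximal family of size `c * (a + 1) = c`.
-/

universe u
open Cardinal

/-- A family `𝒜` of subsets of `α` is `μ`-almost disjoint: its union has size `μ`,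
each member has size `μ`, and distinct members intersect in a set of size `< μ`. -/
def IsADFamily (μ : Cardinal.{u}) {α : Type u} (𝒜 : Set (Set α)) : Prop :=
  #(⋃₀ 𝒜) = μ ∧ (∀ A ∈ 𝒜, #A = μ) ∧
    ∀ A ∈ 𝒜, ∀ B ∈ 𝒜, A ≠ B → #(↥(A ∩ B)) < μ

/-- `𝒜` is maximal `μ`-almost disjoint: it is `μ`-ad and no new set `C ⊆ ⋃₀ 𝒜`
can be added keeping the family `μ`-almost disjoint. -/
def IsMadFamily (μ : Cardinal.{u}) {α : Type u} (𝒜 : Set (Set α)) : Prop :=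
  IsADFamily μ 𝒜 ∧ ¬∃ C, C ⊆ ⋃₀ 𝒜 ∧ C ∉ 𝒜 ∧ IsADFamily μ (insert C 𝒜)

/-- `MADSet μ` is the set of cardinalities of nontrivial `μ`-mad families,
i.e. `μ`-mad families with at least `cf μ` members. -/
def MADSet (μ : Cardinal.{u}) : Set Cardinal.{u} :=
  {c | ∃ 𝒜 : Set (Set μ.out), IsMadFamily μ 𝒜 ∧ μ.ord.cof ≤ #𝒜 ∧ #𝒜 = c}

section Cardinality

variable {μ : Cardinal.{u}} {α ι : Type u}

theorem mk_lt_of_subset_union (hμ : ℵ₀ ≤ μ) {S T U : Set α} (hS : S ⊆ T ∪ U) (hT : #T < μ)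
    (hU : #U < μ) : #S < μ :=
  ((mk_le_mk_of_subset hS).trans (mk_union_le T U)).trans_lt (add_lt_of_lt hμ hT hU)

theorem mk_biUnion_lt (hμ : ℵ₀ ≤ μ) (I : Set ι) (S : ι → Set α) (hI : #I < μ.ord.cof)
    (hS : ∀ i ∈ I, #(S i) < μ) : #(⋃ i ∈ I, S i) < μ :=
  (mk_biUnion_le S I).trans_lt <| mul_lt_of_lt hμ (hI.trans_le (Ordinal.cof_ord_le μ))
    (iSup_lt_of_lt_cof_ord hI fun i => hS i i.2)

theorem mk_iUnion_le_of_le (S : ι → Set α) {c : Cardinal.{u}} (hS : ∀ i, #(S i) ≤ c) :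
    #(⋃ i, S i) ≤ #ι * c :=
  (mk_iUnion_le S).trans (mul_le_mul_right (ciSup_le' hS) _)

theorem mk_le_of_mk_inter_fiber_le (π : α → ι) (C : Set α) {c : Cardinal.{u}}
    (hC : ∀ i, #(C ∩ π ⁻¹' {i} : Set α) ≤ c) : #C ≤ #ι * c := by
  have hcover : C = ⋃ i, C ∩ π ⁻¹' {i} := by ext; simp
  exact (mk_congr (Equiv.setCongr hcover)).trans_le (mk_iUnion_le_of_le _ hC)

theorem mk_Iio_toType_lt (y : μ.ord.ToType) : #(Set.Iio y) < μ := by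
  simpa using mk_Iio_lt y (by simp)

theorem mk_Iic_toType_lt (hμ : ℵ₀ ≤ μ) (y : μ.ord.ToType) : #(Set.Iic y) < μ := by
  simpa using mk_Iic_lt y (by simp) (by simpa using hμ)

theorem image_image_setOf_mk_eq {f : ι → α} (hf : f.Injective) :
    Set.image f '' {C | #C = μ} = {C | C ⊆ Set.range f ∧ #C = μ} := by
  ext C
  constructor
  · rintro ⟨C, hC, rfl⟩
    exact ⟨Set.image_subset_range f C, (mk_image_eq hf).trans hC⟩
  · rintro ⟨hC, hCμ⟩
    obtain ⟨C, rfl⟩ := Set.subset_range_iff_exists_image_eq.1 hC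
    exact ⟨C, (mk_image_eq hf).symm.trans hCμ, rfl⟩

theorem mk_preimage_fst_singleton (i : ι) : #(Prod.fst ⁻¹' {i} : Set (ι × α)) = #α := by
  rw [Set.preimage_fst_singleton_eq_range, mk_range_eq _ (Prod.mk_right_injective i)]

theorem preimage_fst_singleton_injective [Nonempty α] :
    (fun i => Prod.fst ⁻¹' {i} : ι → Set (ι × α)).Injective :=
  (Set.preimage_injective.2 Prod.fst_surjective).comp Set.singleton_injective

end Cardinality

/-- `ℱ` is a `μ`-almost disjoint family of members of `𝒞` that is maximal within the class `𝒞`.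
Maximality is phrased through intersections: every member of `𝒞` meets a member of `ℱ` in a set of
size at least `μ`. -/
structure IsMaximalADIn (μ : Cardinal.{u}) {α : Type u} (𝒞 ℱ : Set (Set α)) : Prop where
  subset : ℱ ⊆ 𝒞
  pairwise : ℱ.Pairwise fun A B => #(A ∩ B : Set α) < μ
  exists_mem : ∀ C ∈ 𝒞, ∃ A ∈ ℱ, μ ≤ #(A ∩ C : Set α)

namespace IsMaximalADIn

variable {μ : Cardinal.{u}} {α β : Type u} {𝒞 𝒞' ℱ : Set (Set α)}

theorem anti (h : IsMaximalADIn μ 𝒞 ℱ) (h𝒞 : 𝒞' ⊆ 𝒞) (hℱ : ℱ ⊆ 𝒞') : IsMaximalADIn μ 𝒞' ℱ :=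
  ⟨hℱ, h.pairwise, fun C hC => h.exists_mem C (h𝒞 hC)⟩

theorem image_iff {f : α → β} (hf : f.Injective) :
    IsMaximalADIn μ (Set.image f '' 𝒞) (Set.image f '' ℱ) ↔ IsMaximalADIn μ 𝒞 ℱ := by
  have hinter (A C : Set α) : #(f '' A ∩ f '' C : Set β) = #(A ∩ C : Set α) := by
    rw [← Set.image_inter hf, mk_image_eq hf]
  constructor
  · rintro ⟨hsub, hpair, hmax⟩
    refine ⟨(Set.image_subset_image_iff hf.image_injective).1 hsub, fun A hA B hB hAB => ?_,
      fun C hC => ?_⟩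
    · exact (hinter A B).symm.trans_lt <|
        hpair ⟨A, hA, rfl⟩ ⟨B, hB, rfl⟩ (hf.image_injective.ne hAB)
    · obtain ⟨_, ⟨A, hA, rfl⟩, hAC⟩ := hmax _ ⟨C, hC, rfl⟩
      exact ⟨A, hA, hAC.trans_eq (hinter A C)⟩
  · rintro ⟨hsub, hpair, hmax⟩
    refine ⟨Set.image_mono hsub, ?_, ?_⟩
    · rintro _ ⟨A, hA, rfl⟩ _ ⟨B, hB, rfl⟩ hAB
      exact (hinter A B).trans_lt (hpair hA hB fun h => hAB (by rw [h]))
    · rintro _ ⟨C, hC, rfl⟩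
      obtain ⟨A, hA, hAC⟩ := hmax C hC
      exact ⟨f '' A, ⟨A, hA, rfl⟩, hAC.trans_eq (hinter A C).symm⟩

theorem exists_superset (h𝒞 : ∀ C ∈ 𝒞, μ ≤ #C) (hsub : ℱ ⊆ 𝒞)
    (hpair : ℱ.Pairwise fun A B => #(A ∩ B : Set α) < μ) :
    ∃ 𝒢, ℱ ⊆ 𝒢 ∧ IsMaximalADIn μ 𝒞 𝒢 := by
  obtain ⟨𝒢, hℱ𝒢, ⟨⟨hsub𝒢, hpair𝒢⟩, hmax⟩⟩ := zorn_subset_nonempty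
    {ℱ : Set (Set α) | ℱ ⊆ 𝒞 ∧ ℱ.Pairwise fun A B => #(A ∩ B : Set α) < μ}
    (fun c hc hchain _ => ⟨⋃₀ c, ⟨Set.sUnion_subset fun ℱ hℱ => (hc hℱ).1,
      (Set.pairwise_sUnion hchain.directedOn).2 fun ℱ hℱ => (hc hℱ).2⟩,
      fun _ => Set.subset_sUnion_of_mem⟩) ℱ ⟨hsub, hpair⟩
  refine ⟨𝒢, hℱ𝒢, hsub𝒢, hpair𝒢, fun C hC => ?_⟩
  by_contra! hlt
  have hmem : C ∈ 𝒢 := hmax ⟨Set.insert_subset hC hsub𝒢, hpair𝒢.insert fun A hA _ =>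
    ⟨Set.inter_comm A C ▸ hlt A hA, hlt A hA⟩⟩ (Set.subset_insert C 𝒢) (Set.mem_insert C 𝒢)
  exact (hlt C hmem).not_ge (by simpa using h𝒞 C hC)

end IsMaximalADIn

section MADSet

variable {μ : Cardinal.{u}} {α : Type u}

theorem isMadFamily_iff_isMaximalADIn {𝒜 : Set (Set α)} :
    IsMadFamily μ 𝒜 ↔ #(⋃₀ 𝒜) = μ ∧ IsMaximalADIn μ {C | C ⊆ ⋃₀ 𝒜 ∧ #C = μ} 𝒜 := by
  constructor
  · rintro ⟨⟨hU, hcard, hpair⟩, hmax⟩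
    refine ⟨hU, fun A hA => ⟨Set.subset_sUnion_of_mem hA, hcard A hA⟩,
      fun A hA B hB => hpair A hA B hB, fun C ⟨hCU, hC⟩ => ?_⟩
    by_contra! hlt
    have hmem : C ∉ 𝒜 := fun hmem => (hlt C hmem).ne (by simpa using hC)
    have hpair' : (insert C 𝒜).Pairwise fun A B => #(A ∩ B : Set α) < μ :=
      Set.Pairwise.insert (fun A hA B hB => hpair A hA B hB)
        fun A hA _ => ⟨Set.inter_comm A C ▸ hlt A hA, hlt A hA⟩
    refine hmax ⟨C, hCU, hmem, ?_, ?_, fun A hA B hB => hpair' hA hB⟩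
    · rwa [Set.sUnion_insert, Set.union_eq_right.2 hCU]
    · exact Set.forall_mem_insert.2 ⟨hC, hcard⟩
  · rintro ⟨hU, hsub, hpair, hmax⟩
    refine ⟨⟨hU, fun A hA => (hsub hA).2, fun A hA B hB => hpair hA hB⟩, ?_⟩
    rintro ⟨C, hCU, hC, -, hcard, had⟩
    obtain ⟨A, hA, hAC⟩ := hmax C ⟨hCU, hcard C (Set.mem_insert C 𝒜)⟩
    exact (had A (Set.mem_insert_of_mem C hA) C (Set.mem_insert C 𝒜)
      (ne_of_mem_of_not_mem hA hC)).not_ge hAC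

theorem mem_MADSet_iff (hα : #α = μ) {c : Cardinal.{u}} :
    c ∈ MADSet μ ↔
      ∃ ℱ : Set (Set α), IsMaximalADIn μ {C | #C = μ} ℱ ∧ μ.ord.cof ≤ #ℱ ∧ #ℱ = c := by
  constructor
  · rintro ⟨𝒜, hmad, hcof, hc⟩
    obtain ⟨hU, hmax⟩ := isMadFamily_iff_isMaximalADIn.1 hmad
    obtain ⟨e⟩ : Nonempty (α ≃ ⋃₀ 𝒜) := Cardinal.eq.1 (hα.trans hU.symm)
    let f : α → μ.out := fun x => e x
    have hf : f.Injective := Subtype.val_injective.comp e.injective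
    have hrange : Set.range f = ⋃₀ 𝒜 := by
      rw [show f = Subtype.val ∘ e from rfl, e.surjective.range_comp, Subtype.range_coe]
    obtain ⟨ℱ, hℱ⟩ : ∃ ℱ, Set.image f '' ℱ = 𝒜 :=
      Set.subset_range_iff_exists_image_eq.1 fun A hA =>
        Set.subset_range_iff_exists_image_eq.1 (hrange ▸ Set.subset_sUnion_of_mem hA)
    rw [← hrange, ← hℱ, ← image_image_setOf_mk_eq hf, IsMaximalADIn.image_iff hf] at hmax
    rw [← hℱ, mk_image_eq hf.image_injective] at hcof hc
    exact ⟨ℱ, hmax, hcof, hc⟩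
  · rintro ⟨ℱ, hmax, hcof, hc⟩
    obtain ⟨e⟩ : Nonempty (α ≃ μ.out) := Cardinal.eq.1 (by rw [hα, mk_out])
    have hmax' := (IsMaximalADIn.image_iff e.injective).2 hmax
    rw [image_image_setOf_mk_eq e.injective] at hmax'
    obtain ⟨A, hA, -⟩ := hmax'.exists_mem Set.univ (by simp)
    have hU : #(⋃₀ (Set.image e '' ℱ)) = μ := le_antisymm ((mk_set_le _).trans (mk_out μ).le)
      ((hmax'.subset hA).2.symm.trans_le (mk_le_mk_of_subset (Set.subset_sUnion_of_mem hA)))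
    rw [← mk_image_eq e.injective.image_injective] at hcof hc
    refine ⟨_, isMadFamily_iff_isMaximalADIn.2 ⟨hU, hmax'.anti ?_ ?_⟩, hcof, hc⟩
    · exact fun C hC => ⟨by simp, hC.2⟩
    · exact fun A hA => ⟨Set.subset_sUnion_of_mem hA, (hmax'.subset hA).2⟩

theorem MADSet_nonempty (hμ : ℵ₀ ≤ μ) : (MADSet μ).Nonempty := by
  have : Nonempty μ.out := mk_ne_zero_iff.1 (by simpa using (aleph0_pos.trans_le hμ).ne')
  let column (i : μ.out) : Set (μ.out × μ.out) := Prod.fst ⁻¹' {i}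
  have hcolumn : column.Injective := preimage_fst_singleton_injective
  obtain ⟨𝒢, hsub, hmax⟩ := IsMaximalADIn.exists_superset (μ := μ)
    (𝒞 := {C : Set (μ.out × μ.out) | #C = μ}) (ℱ := Set.range column) (fun C hC => hC.ge)
    (by rintro _ ⟨i, rfl⟩; exact (mk_preimage_fst_singleton i).trans (mk_out μ))
    (by
      rintro _ ⟨i, rfl⟩ _ ⟨j, rfl⟩ hij
      have hdisj : Disjoint (column i) (column j) :=
        Set.pairwiseDisjoint_fiber Prod.fst Set.univ trivial trivial fun h => hij (by rw [h])
      simpa [hdisj.inter_eq] using aleph0_pos.trans_le hμ)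
  have hμ𝒢 : μ ≤ #𝒢 := by
    simpa only [mk_range_eq column hcolumn, mk_out] using mk_le_mk_of_subset hsub
  exact ⟨#𝒢, (mem_MADSet_iff (by simp [mul_eq_self hμ])).2
    ⟨𝒢, hmax, (Ordinal.cof_ord_le μ).trans hμ𝒢, rfl⟩⟩

end MADSet

section Cofinality

variable {μ κ : Cardinal.{u}}

theorem exists_strictMono_isCofinal_range {α : Type u} [LinearOrder α] [WellFoundedLT α]
    (hα : Order.cof α = κ) : ∃ f : κ.ord.ToType → α, StrictMono f ∧ IsCofinal (Set.range f) := by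
  subst hα
  obtain ⟨s, hs, htype⟩ := Ordinal.exists_ord_cof_eq α
  obtain ⟨e⟩ := Ordinal.type_eq.1 ((Ordinal.type_toType _).trans htype.symm)
  refine ⟨fun k => e k, fun _ _ h => e.map_rel_iff.2 h, ?_⟩
  rw [show (fun k => (e k : α)) = Subtype.val ∘ e from rfl, e.surjective.range_comp,
    Subtype.range_coe]
  exact hs

theorem exists_mem_le_of_le_mk {J : Set κ.ord.ToType} (hJ : κ ≤ #J) (k : κ.ord.ToType) :
    ∃ l ∈ J, k ≤ l := by
  by_contra! h
  exact (hJ.trans (mk_le_mk_of_subset (t := Set.Iio k) h)).not_gt (mk_Iio_toType_lt k)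

theorem exists_bounds_of_isSingular (hμ : μ.IsSingular) :
    ∃ ν : μ.ord.cof.ord.ToType → Cardinal.{u}, (∀ k, ν k < μ) ∧
      ∀ (J : Set μ.ord.cof.ord.ToType) (x : Cardinal.{u}), μ.ord.cof ≤ #J → (∀ k ∈ J, ν k ≤ x) →
        μ ≤ x := by
  obtain ⟨f, hf, hcof⟩ := exists_strictMono_isCofinal_range (Ordinal.cof_toType μ.ord)
  refine ⟨fun k => #(Set.Iic (f k)), fun k => mk_Iic_toType_lt hμ.aleph0_le (f k),
    fun J x hJ hx => ?_⟩
  by_contra! hlt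
  have hcover : ⋃ k, Set.Iic (f k) = Set.univ := by
    simpa only [Set.biUnion_range] using isCofinal_iff_iUnion_Iic_eq_univ.1 hcof
  have hle : #(⋃ k, Set.Iic (f k)) ≤ #μ.ord.cof.ord.ToType * x :=
    mk_iUnion_le_of_le _ fun k => by
      obtain ⟨l, hl, hkl⟩ := exists_mem_le_of_le_mk hJ k
      exact (mk_le_mk_of_subset (Set.Iic_subset_Iic.2 (hf.monotone hkl))).trans (hx l hl)
  rw [hcover, mk_univ, mk_ord_toType, mk_ord_toType] at hle
  exact hle.not_gt (mul_lt_of_lt hμ.aleph0_le hμ.cof_ord_lt hlt)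

theorem exists_mk_fiber_lt (hμ : ℵ₀ ≤ μ) {α : Type u} (hα : #α ≤ μ) :
    ∃ g : α → μ.ord.cof.ord.ToType, ∀ k, #(g ⁻¹' {k}) < μ := by
  obtain ⟨f, -, hcof⟩ := exists_strictMono_isCofinal_range (Ordinal.cof_toType μ.ord)
  obtain ⟨e⟩ : Nonempty (α ↪ μ.ord.ToType) := (Cardinal.le_def _ _).1 (by simpa using hα)
  have hbound (x : α) : ∃ k, e x ≤ f k := by
    obtain ⟨_, ⟨k, rfl⟩, hk⟩ := hcof (e x)
    exact ⟨k, hk⟩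
  choose g hg using hbound
  refine ⟨g, fun k => lt_of_le_of_lt ?_ (mk_Iic_toType_lt hμ (f k))⟩
  rw [← mk_image_eq e.injective]
  refine mk_le_mk_of_subset ?_
  rintro _ ⟨x, rfl, rfl⟩
  exact hg x

end Cofinality

/-! ### Blowing up `cf μ` to `μ` -/

/-- `π : α → β` blows `κ` up to `μ`: pulling back along `π` turns smallness and fullness relative
to `κ` into smallness and fullness relative to `μ`, and every set `C` of size `μ` has a trace `D` of
size `κ` such that a set meeting `D` in full size pulls back to a set meeting `C` in full size. -/
structure IsBlowUp (κ μ : Cardinal.{u}) {α β : Type u} (π : α → β) : Prop where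
  mk_preimage_lt : ∀ B : Set β, #B < κ → #(π ⁻¹' B) < μ
  mk_preimage : ∀ B : Set β, #B = κ → #(π ⁻¹' B) = μ
  exists_trace : ∀ C : Set α, #C = μ →
    ∃ D : Set β, #D = κ ∧ ∀ B, κ ≤ #(B ∩ D : Set β) → μ ≤ #(π ⁻¹' B ∩ C : Set α)

namespace IsBlowUp

variable {κ μ : Cardinal.{u}} {α β : Type u} {π : α → β} {ℬ : Set (Set β)}

theorem isMaximalADIn_image_preimage (hπ : IsBlowUp κ μ π)
    (hℬ : IsMaximalADIn κ {B | #B = κ} ℬ) :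
    IsMaximalADIn μ {C | #C = μ} (Set.preimage π '' ℬ) := by
  refine ⟨?_, ?_, fun C hC => ?_⟩
  · rintro _ ⟨B, hB, rfl⟩
    exact hπ.mk_preimage B (hℬ.subset hB)
  · rintro _ ⟨A, hA, rfl⟩ _ ⟨B, hB, rfl⟩ hAB
    exact hπ.mk_preimage_lt _ (hℬ.pairwise hA hB fun h => hAB (by rw [h]))
  · obtain ⟨D, hD, htrace⟩ := hπ.exists_trace C hC
    obtain ⟨B, hB, hBD⟩ := hℬ.exists_mem D hD
    exact ⟨_, ⟨B, hB, rfl⟩, htrace B hBD⟩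

theorem injOn_preimage (hπ : IsBlowUp κ μ π) (hℬ : IsMaximalADIn κ {B | #B = κ} ℬ) :
    Set.InjOn (Set.preimage π) ℬ := by
  intro A hA B hB hAB
  by_contra hne
  refine (hπ.mk_preimage_lt _ (hℬ.pairwise hA hB hne)).ne ?_
  rw [Set.preimage_inter, ← hAB, Set.inter_self]
  exact hπ.mk_preimage A (hℬ.subset hA)

end IsBlowUp

section BlowUp

variable {μ : Cardinal.{u}} {α : Type u}

theorem isBlowUp_of_mk_fiber (hμ : μ.IsSingular) {π : α → μ.ord.cof.ord.ToType}
    (hlt : ∀ k, #(π ⁻¹' {k}) < μ)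
    (hunb : ∀ (J : Set μ.ord.cof.ord.ToType) (x : Cardinal.{u}), μ.ord.cof ≤ #J →
      (∀ k ∈ J, #(π ⁻¹' {k}) ≤ x) → μ ≤ x) :
    IsBlowUp μ.ord.cof μ π := by
  have hsmall (B : Set μ.ord.cof.ord.ToType) (hB : #B < μ.ord.cof) : #(π ⁻¹' B) < μ := by
    rw [← Set.biUnion_preimage_singleton]
    exact mk_biUnion_lt hμ.aleph0_le B _ hB fun k _ => hlt k
  have hle (C : Set α) (x) (hx : ∀ k, #(C ∩ π ⁻¹' {k} : Set α) ≤ x) : #C ≤ μ.ord.cof * x :=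
    (mk_le_of_mk_inter_fiber_le π C hx).trans_eq (by rw [mk_ord_toType])
  refine ⟨hsmall, fun B hB => le_antisymm ?_ ?_, fun C hC => ?_⟩
  · refine (hle _ μ fun k => (mk_le_mk_of_subset Set.inter_subset_right).trans (hlt k).le).trans ?_
    exact (mul_le_mul_left hμ.cof_ord_lt.le μ).trans (mul_eq_self hμ.aleph0_le).le
  · exact hunb B _ hB.ge fun k hk =>
      mk_le_mk_of_subset (Set.preimage_mono (Set.singleton_subset_iff.2 hk))
  · have hpick (k) : ∃ d, #(π ⁻¹' {k}) ≤ #(C ∩ π ⁻¹' {d} : Set α) := by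
      by_contra! h
      exact (hle C _ fun d => (h d).le).not_gt
        (hC.symm ▸ mul_lt_of_lt hμ.aleph0_le hμ.cof_ord_lt (hlt k))
    choose d hd using hpick
    have hmeet (B : Set μ.ord.cof.ord.ToType) (J : Set μ.ord.cof.ord.ToType)
        (hJ : μ.ord.cof ≤ #J) (hJB : ∀ k ∈ J, d k ∈ B) : μ ≤ #(π ⁻¹' B ∩ C : Set α) :=
      hunb J _ hJ fun k hk => (hd k).trans <| mk_le_mk_of_subset fun x ⟨hxC, hx⟩ =>
        ⟨show π x ∈ B from (show π x = d k from hx) ▸ hJB k hk, hxC⟩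
    refine ⟨Set.range d, le_antisymm (mk_range_le.trans (mk_ord_toType _).le) ?_, fun B hB => ?_⟩
    · by_contra! hlt
      exact (hmeet (Set.range d) Set.univ (by simp) fun k _ => ⟨k, rfl⟩).not_gt <|
        (mk_le_mk_of_subset Set.inter_subset_left).trans_lt (hsmall _ hlt)
    · refine hmeet B (d ⁻¹' (B ∩ Set.range d)) (hB.trans ?_) fun k hk => hk.1
      exact mk_preimage_of_subset_range d _ Set.inter_subset_right

theorem exists_isBlowUp (hμ : μ.IsSingular) :
    ∃ (α : Type u) (π : α → μ.ord.cof.ord.ToType), #α = μ ∧ IsBlowUp μ.ord.cof μ π := by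
  obtain ⟨ν, hν, hunb⟩ := exists_bounds_of_isSingular hμ
  let π : (Σ k, (ν k).out) → μ.ord.cof.ord.ToType := Sigma.fst
  have hfiber (k) : #(π ⁻¹' {k}) = ν k := by
    rw [← Set.range_sigmaMk, mk_range_eq _ sigma_mk_injective, mk_out]
  have hπ : IsBlowUp μ.ord.cof μ π := isBlowUp_of_mk_fiber hμ (by simpa only [hfiber] using hν)
    (by simpa only [hfiber] using hunb)
  exact ⟨_, π, by simpa using hπ.mk_preimage Set.univ (by rw [mk_univ, mk_ord_toType]), hπ⟩

theorem MADSet_cof_subset (hμ : μ.IsSingular) : MADSet μ.ord.cof ⊆ MADSet μ := by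
  rintro a ha
  obtain ⟨ℬ, hℬ, hcof, hcard⟩ := (mem_MADSet_iff (mk_ord_toType μ.ord.cof)).1 ha
  obtain ⟨α, π, hα, hπ⟩ := exists_isBlowUp hμ
  have hmk : #(Set.preimage π '' ℬ) = a :=
    (mk_image_eq_of_injOn _ _ (hπ.injOn_preimage hℬ)).trans hcard
  refine (mem_MADSet_iff hα).2 ⟨_, hπ.isMaximalADIn_image_preimage hℬ, ?_, hmk⟩
  rw [hmk, ← hcard]
  exact (Ordinal.cof_ord_cof μ.ord).symm.trans_le hcof

end BlowUp

/-! ### Mad families with prescribed members -/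

/-- The sets of size `μ` that are `μ`-almost disjoint from every fibre of `r`. -/
def transversals (μ : Cardinal.{u}) {α ι : Type u} (r : α → ι) : Set (Set α) :=
  {C | #C = μ ∧ ∀ i, #(C ∩ r ⁻¹' {i} : Set α) < μ}

section Transversals

variable {μ a : Cardinal.{u}} {α : Type u}

theorem mk_inter_lt_of_sdiff_lt (hμ : ℵ₀ ≤ μ) {S T U : Set α} (hTU : #(T \ U : Set α) < μ)
    (hSU : #(S ∩ U : Set α) < μ) : #(S ∩ T : Set α) < μ := by
  refine mk_lt_of_subset_union hμ (fun x ⟨hxS, hxT⟩ => ?_) hSU hTU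
  exact (Classical.em (x ∈ U)).imp (⟨hxS, ·⟩) (⟨hxT, ·⟩)

/-- Points in some `b i` go to the first such `i`, so `b i` loses to its fibre only its small
intersections with the fewer than `cf μ` earlier sets. -/
theorem exists_mk_sdiff_fiber_lt (hμ : ℵ₀ ≤ μ) (hα : #α ≤ μ) (b : μ.ord.cof.ord.ToType → Set α)
    (hb : Pairwise fun i j => #(b i ∩ b j : Set α) < μ) :
    ∃ r : α → μ.ord.cof.ord.ToType,
      ∀ i, #(b i \ r ⁻¹' {i} : Set α) < μ ∧ #(r ⁻¹' {i} \ b i : Set α) < μ := by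
  obtain ⟨g, hg⟩ := exists_mk_fiber_lt hμ hα
  have hindex (x : α) : ∃ i, (∀ j, x ∈ b j → x ∈ b i ∧ i ≤ j) ∧ ((∀ j, x ∉ b j) → g x = i) := by
    by_cases hx : ∃ j, x ∈ b j
    · refine ⟨wellFounded_lt.min {j | x ∈ b j} hx, fun j hj =>
        ⟨wellFounded_lt.min_mem {j | x ∈ b j} hx, ?_⟩, fun h => absurd hx (not_exists.2 h)⟩
      exact not_lt.1 (wellFounded_lt.not_lt_min {j | x ∈ b j} hj)
    · exact ⟨g x, fun j hj => absurd ⟨j, hj⟩ hx, fun _ => rfl⟩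
  choose r hr hrg using hindex
  refine ⟨r, fun i => ⟨?_, ?_⟩⟩
  · refine (mk_le_mk_of_subset (t := ⋃ j ∈ Set.Iio i, b j ∩ b i) ?_).trans_lt
      (mk_biUnion_lt hμ _ _ (mk_Iio_toType_lt i) fun j hj => hb (Set.mem_Iio.1 hj).ne)
    rintro x ⟨hx, hri⟩
    obtain ⟨hrx, hle⟩ := hr x i hx
    exact Set.mem_biUnion (lt_of_le_of_ne hle hri) ⟨hrx, hx⟩
  · refine (mk_le_mk_of_subset ?_).trans_lt (hg i)
    rintro x ⟨rfl, hx⟩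
    exact hrg x fun j hj => hx (hr x j hj).1

/-- Take the fibres almost equal to `cf μ` many members of a mad family; the other members form
the maximal family of transversals. -/
theorem exists_fiber_isMaximalADIn_transversals (hμ : ℵ₀ ≤ μ) (ha : a ∈ MADSet μ)
    (hα : #α = μ) : ∃ (r : α → μ.ord.cof.ord.ToType) (ℱ : Set (Set α)),
      (∀ i, #(r ⁻¹' {i}) = μ) ∧ #ℱ ≤ a ∧ IsMaximalADIn μ (transversals μ r) ℱ := by
  obtain ⟨ℬ, hℬ, hcof, hcard⟩ := (mem_MADSet_iff hα).1 ha
  obtain ⟨b⟩ : Nonempty (μ.ord.cof.ord.ToType ↪ ℬ) := (Cardinal.le_def _ _).1 (by simpa using hcof)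
  obtain ⟨r, hr⟩ := exists_mk_sdiff_fiber_lt hμ hα.le (fun i => (b i : Set α))
    fun i j hij => hℬ.pairwise (b i).2 (b j).2 fun h => hij (b.injective (Subtype.ext h))
  refine ⟨r, ℬ \ Set.range fun i => (b i : Set α), fun i => ?_,
    (mk_le_mk_of_subset Set.sdiff_subset).trans hcard.le, ?_, ?_, ?_⟩
  · refine le_antisymm ((mk_set_le _).trans hα.le) (not_lt.1 fun hlt => ?_)
    have : #(Set.univ ∩ b i : Set α) < μ :=
      mk_inter_lt_of_sdiff_lt hμ (hr i).1 (by rwa [Set.univ_inter])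
    rw [Set.univ_inter] at this
    exact this.ne (hℬ.subset (b i).2)
  · rintro B ⟨hB, hBb⟩
    refine ⟨hℬ.subset hB, fun i => mk_inter_lt_of_sdiff_lt hμ (hr i).2 ?_⟩
    exact hℬ.pairwise hB (b i).2 fun h => hBb ⟨i, h.symm⟩
  · exact hℬ.pairwise.mono Set.sdiff_subset
  · rintro C ⟨hC, hCr⟩
    obtain ⟨B, hB, hBC⟩ := hℬ.exists_mem C hC
    refine ⟨B, ⟨hB, ?_⟩, hBC⟩
    rintro ⟨i, rfl⟩
    rw [Set.inter_comm] at hBC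
    exact hBC.not_gt (mk_inter_lt_of_sdiff_lt hμ (hr i).1 (hCr i))

theorem exists_isMaximalADIn_transversals (hμ : ℵ₀ ≤ μ) (ha : a ∈ MADSet μ)
    {s : α → μ.ord.cof.ord.ToType} (hs : ∀ i, #(s ⁻¹' {i}) = μ) :
    ∃ ℱ : Set (Set α), #ℱ ≤ a ∧ IsMaximalADIn μ (transversals μ s) ℱ := by
  obtain ⟨r, ℱ, hr, hcard, hmax⟩ := exists_fiber_isMaximalADIn_transversals hμ ha (mk_out μ)
  have hfiber (i) : Nonempty ({x // r x = i} ≃ {x // s x = i}) :=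
    Cardinal.eq.1 ((hr i).trans (hs i).symm)
  let e : μ.out ≃ α := Equiv.ofFiberEquiv fun i => (hfiber i).some
  have hrs : s ∘ e = r := funext (Equiv.ofFiberEquiv_map _)
  have himage : Set.image e '' transversals μ r = transversals μ s := by
    have hmem (C : Set μ.out) : e '' C ∈ transversals μ s ↔ C ∈ transversals μ r := by
      simp only [transversals, Set.mem_ofPred_eq, ← hrs, mk_image_eq e.injective,
        Set.preimage_comp, ← Set.image_inter_preimage]
    ext C
    obtain ⟨C, rfl⟩ := e.surjective.image_surjective C
    rw [e.injective.image_injective.mem_set_image, hmem]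
  exact ⟨_, mk_image_le.trans hcard, himage ▸ (IsMaximalADIn.image_iff e.injective).2 hmax⟩

end Transversals

/-! ### Sets approaching a level from below -/

section MkPreimageIic

variable {μ : Cardinal.{u}} {α ι : Type u} {q : α → ι}

theorem biUnion_preimage_Iic_of_isCofinal [Preorder ι] {s : Set ι} (hs : IsCofinal s) :
    ⋃ i ∈ s, q ⁻¹' Set.Iic i = Set.univ := by
  rw [← Set.preimage_iUnion₂, isCofinal_iff_iUnion_Iic_eq_univ.1 hs, Set.preimage_univ]

theorem cof_ord_le_cof_of_mk_preimage_Iic_lt [Preorder ι] (hμ : ℵ₀ ≤ μ) (hα : #α = μ)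
    (hq : ∀ i, #(q ⁻¹' Set.Iic i) < μ) : μ.ord.cof ≤ Order.cof ι := by
  obtain ⟨s, hs, hcard⟩ := Order.exists_cof_eq ι
  by_contra! hlt
  have := mk_biUnion_lt hμ s (fun i => q ⁻¹' Set.Iic i) (hcard.trans_lt hlt) fun i _ => hq i
  rw [biUnion_preimage_Iic_of_isCofinal hs, mk_univ] at this
  exact this.ne hα

variable [LinearOrder ι]

theorem isCofinal_range_of_forall_preimage_Iic_ne (hq : ∀ i, q ⁻¹' Set.Iic i ≠ Set.univ) :
    IsCofinal (Set.range q) := by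
  by_contra h
  obtain ⟨i, hi⟩ := not_isCofinal_iff.1 h
  exact hq i (Set.eq_univ_of_forall fun x => (hi _ ⟨x, rfl⟩).le)

theorem exists_le_mk_preimage_Iic [WellFoundedLT ι] (hμ : μ.IsSingular) (hα : #α = μ)
    (hq : ∀ i, #(q ⁻¹' Set.Iic i) < μ) {x : Cardinal.{u}} (hx : x < μ) :
    ∃ i, x ≤ #(q ⁻¹' Set.Iic i) := by
  have hlt : Order.cof ι < μ := by
    have hrange : IsCofinal (Set.range q) := isCofinal_range_of_forall_preimage_Iic_ne
      fun i h => (hq i).ne (by rw [h, mk_univ, hα])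
    -- `cof ι` is `0`, `1` or regular, whereas `μ` is singular.
    refine ((Order.cof_le hrange).trans (mk_range_le.trans hα.le)).lt_of_ne fun h => ?_
    exact hμ.cof_ord_ne (h ▸ Order.cof_ord_cof ι)
  obtain ⟨s, hs, hcard⟩ := Order.exists_cof_eq ι
  by_contra! h
  have := mk_iUnion_le_of_le (fun i : s => q ⁻¹' Set.Iic (i : ι)) fun i => (h i).le
  rw [← Set.biUnion_eq_iUnion s fun i _ => q ⁻¹' Set.Iic i, biUnion_preimage_Iic_of_isCofinal hs,
    mk_univ, hα, hcard] at this
  exact this.not_gt (mul_lt_of_lt hμ.aleph0_le hlt hx)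

theorem cof_eq_cof_ord_of_mk_preimage_Iic_lt [WellFoundedLT ι] (hμ : μ.IsSingular) (hα : #α = μ)
    (hq : ∀ i, #(q ⁻¹' Set.Iic i) < μ) : Order.cof ι = μ.ord.cof := by
  obtain ⟨ν, hν, hunb⟩ := exists_bounds_of_isSingular hμ
  choose i hi using fun k => exists_le_mk_preimage_Iic hμ hα hq (hν k)
  have hcof : IsCofinal (Set.range i) := by
    by_contra h
    obtain ⟨j, hj⟩ := not_isCofinal_iff.1 h
    refine (hunb Set.univ _ (by simp) fun k _ => (hi k).trans (mk_le_mk_of_subset ?_)).not_gt (hq j)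
    exact Set.preimage_mono (Set.Iic_subset_Iic.2 (hj _ ⟨k, rfl⟩).le)
  exact ((Order.cof_le hcof).trans (mk_range_le.trans (mk_ord_toType _).le)).antisymm
    (cof_ord_le_cof_of_mk_preimage_Iic_lt hμ.aleph0_le hα hq)

end MkPreimageIic

/-- The sets of size `μ` that are `μ`-almost disjoint from the preimage of every initial segment
`Set.Iic i`. -/
def initiallySmall (μ : Cardinal.{u}) {α ι : Type u} [Preorder ι] (q : α → ι) : Set (Set α) :=
  {C | #C = μ ∧ ∀ i, #(C ∩ q ⁻¹' Set.Iic i : Set α) < μ}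

section InitiallySmall

variable {μ a : Cardinal.{u}} {α ι : Type u} {q : α → ι}

theorem initiallySmall_eq_transversals [Preorder ι] (hμ : ℵ₀ ≤ μ)
    {e : μ.ord.cof.ord.ToType → ι} (he : IsCofinal (Set.range e)) {s : α → μ.ord.cof.ord.ToType}
    (hs : ∀ x k, s x ≤ k ↔ q x ≤ e k) : initiallySmall μ q = transversals μ s := by
  ext C
  refine and_congr_right fun _ => ⟨fun hC k => ?_, fun hC i => ?_⟩
  · refine (mk_le_mk_of_subset (Set.inter_subset_inter_right C ?_)).trans_lt (hC (e k))
    exact fun x hx => (hs x k).1 (le_of_eq hx)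
  · obtain ⟨_, ⟨k, rfl⟩, hik⟩ := he i
    refine (mk_le_mk_of_subset (t := ⋃ l ∈ Set.Iic k, C ∩ s ⁻¹' {l}) ?_).trans_lt
      (mk_biUnion_lt hμ _ _ (mk_Iic_toType_lt (isRegular_cof (isSuccLimit_ord hμ)).1 k)
        fun l _ => hC l)
    exact fun x ⟨hxC, hx⟩ => Set.mem_biUnion ((hs x k).2 (le_trans hx hik)) ⟨hxC, rfl⟩

variable [LinearOrder ι] [WellFoundedLT ι]

theorem cof_eq_of_initiallySmall_nonempty (hμ : μ.IsSingular)
    (h : (initiallySmall μ q).Nonempty) : Order.cof ι = μ.ord.cof := by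
  obtain ⟨C, hC, hsmall⟩ := h
  refine cof_eq_cof_ord_of_mk_preimage_Iic_lt hμ hC (q := fun x : C => q x) fun i => ?_
  rw [← mk_image_eq Subtype.val_injective]
  exact (mk_le_mk_of_subset (by rintro _ ⟨x, hx, rfl⟩; exact ⟨x.2, hx⟩)).trans_lt (hsmall i)

theorem exists_isMaximalADIn_initiallySmall (hμ : μ.IsSingular) (ha : a ∈ MADSet μ)
    (hα : #α ≤ μ) (hq : ∀ i, #(q ⁻¹' {i}) = μ) :
    ∃ ℱ : Set (Set α), #ℱ ≤ a ∧ IsMaximalADIn μ (initiallySmall μ q) ℱ := by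
  rcases (initiallySmall μ q).eq_empty_or_nonempty with hempty | hne
  · exact ⟨∅, by simp, by simp, by simp, by simp [hempty]⟩
  obtain ⟨e, he, hcof⟩ :=
    exists_strictMono_isCofinal_range (cof_eq_of_initiallySmall_nonempty hμ hne)
  have hleast (x : α) : ∃ k, ∀ l, k ≤ l ↔ q x ≤ e l := by
    obtain ⟨_, ⟨k, rfl⟩, hk⟩ := hcof (q x)
    have hmem := wellFounded_lt.min_mem {k | q x ≤ e k} ⟨k, hk⟩
    refine ⟨_, fun l => ⟨fun hl => hmem.trans (he.monotone hl), fun hl => ?_⟩⟩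
    exact not_lt.1 (wellFounded_lt.not_lt_min {k | q x ≤ e k} hl)
  choose s hs using hleast
  have hfiber (k) : #(s ⁻¹' {k}) = μ := by
    refine le_antisymm ((mk_set_le _).trans hα) ((hq (e k)).symm.trans_le (mk_le_mk_of_subset ?_))
    rintro x hx
    refine eq_of_forall_ge_iff fun l => ?_
    rw [hs, show q x = e k from hx, he.le_iff_le]
  rw [initiallySmall_eq_transversals hμ.aleph0_le hcof hs]
  exact exists_isMaximalADIn_transversals hμ.aleph0_le ha hfiber

end InitiallySmall

/-! ### Gluing over a well-order -/

/-- The sets `C` of size `μ` concentrated at level `δ` of `p`: `δ` is the least level up to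
which `C` has `μ` points, and `C` has no point above `δ`. -/
def concentrated (μ : Cardinal.{u}) {α ι : Type u} [Preorder ι] (p : α → ι) (δ : ι) :
    Set (Set α) :=
  {C | #C = μ ∧ C ⊆ p ⁻¹' Set.Iic δ ∧ ∀ β < δ, #(C ∩ p ⁻¹' Set.Iic β : Set α) < μ}

section Concentrated

variable {μ a : Cardinal.{u}} {α ι : Type u} {p : α → ι}

theorem preimage_singleton_mem_concentrated [Preorder ι] (hμ : 0 < μ) {δ : ι}
    (hp : #(p ⁻¹' {δ}) = μ) : p ⁻¹' {δ} ∈ concentrated μ p δ := by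
  refine ⟨hp, fun x hx => le_of_eq hx, fun β hβ => ?_⟩
  have hdisj : Disjoint (p ⁻¹' {δ}) (p ⁻¹' Set.Iic β) :=
    (Set.disjoint_singleton_left.2 (show δ ∉ Set.Iic β from hβ.not_ge)).preimage p
  rwa [hdisj.inter_eq, mk_eq_zero]

theorem image_image_initiallySmall_restrictPreimage [Preorder ι] (δ : ι) :
    Set.image Subtype.val '' initiallySmall μ ((Set.Iio δ).restrictPreimage p) =
      {C ∈ concentrated μ p δ | C ⊆ p ⁻¹' Set.Iio δ} := by
  have hmk (C : Set (p ⁻¹' Set.Iio δ)) (β : Set.Iio δ) :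
      #(C ∩ (Set.Iio δ).restrictPreimage p ⁻¹' Set.Iic β : Set _) =
        #(Subtype.val '' C ∩ p ⁻¹' Set.Iic β.1 : Set α) := by
    rw [← Set.image_inter_preimage, mk_image_eq Subtype.val_injective]
    rfl
  have hmem (C : Set (p ⁻¹' Set.Iio δ)) : C ∈ initiallySmall μ ((Set.Iio δ).restrictPreimage p) ↔
      Subtype.val '' C ∈ concentrated μ p δ := by
    have hsub : Subtype.val '' C ⊆ p ⁻¹' Set.Iic δ := by
      rintro _ ⟨x, -, rfl⟩
      exact le_of_lt x.2
    simp only [initiallySmall, concentrated, Set.mem_ofPred_eq, hmk, hsub, true_and,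
      mk_image_eq Subtype.val_injective, Subtype.forall, Set.mem_Iio]
  ext C
  constructor
  · rintro ⟨C, hC, rfl⟩
    exact ⟨(hmem C).1 hC, Subtype.coe_image_subset _ C⟩
  · rintro ⟨hC, hsub⟩
    obtain ⟨C, rfl⟩ := Set.subset_range_iff_exists_image_eq.1
      (hsub.trans_eq Subtype.range_coe.symm)
    exact ⟨C, (hmem C).2 hC, rfl⟩

theorem isMaximalADIn_insert_preimage_singleton [PartialOrder ι] (hμ : ℵ₀ ≤ μ) {δ : ι}
    (hp : #(p ⁻¹' {δ}) = μ) {ℱ : Set (Set α)}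
    (hℱ : IsMaximalADIn μ {C ∈ concentrated μ p δ | C ⊆ p ⁻¹' Set.Iio δ} ℱ) :
    IsMaximalADIn μ (concentrated μ p δ) (insert (p ⁻¹' {δ}) ℱ) := by
  have hμ0 : 0 < μ := aleph0_pos.trans_le hμ
  have hdisj (A) (hA : A ∈ ℱ) : p ⁻¹' {δ} ∩ A = ∅ := by
    have : Disjoint (p ⁻¹' {δ}) (p ⁻¹' Set.Iio δ) :=
      (Set.disjoint_singleton_left.2 (show δ ∉ Set.Iio δ from lt_irrefl δ)).preimage p
    exact (this.mono_right (hℱ.subset hA).2).inter_eq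
  refine ⟨Set.insert_subset (preimage_singleton_mem_concentrated hμ0 hp)
    fun A hA => (hℱ.subset hA).1, hℱ.pairwise.insert fun A hA _ => ?_, ?_⟩
  · rw [Set.inter_comm A, hdisj A hA, mk_eq_zero]
    exact ⟨hμ0, hμ0⟩
  · rintro C ⟨hC, hCδ, hsmall⟩
    by_cases hfiber : μ ≤ #(p ⁻¹' {δ} ∩ C : Set α)
    · exact ⟨_, Set.mem_insert _ ℱ, hfiber⟩
    have hbelow : #(C ∩ p ⁻¹' Set.Iio δ : Set α) = μ := by
      refine le_antisymm ((mk_le_mk_of_subset Set.inter_subset_left).trans hC.le) ?_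
      by_contra! hlt
      refine (mk_lt_of_subset_union hμ (fun x hx => ?_) hlt (not_le.1 hfiber)).ne hC
      exact (hCδ hx).lt_or_eq.imp (⟨hx, ·⟩) (⟨·, hx⟩)
    obtain ⟨A, hA, hAC⟩ := hℱ.exists_mem (C ∩ p ⁻¹' Set.Iio δ)
      ⟨⟨hbelow, Set.inter_subset_left.trans hCδ, fun β hβ => (mk_le_mk_of_subset
        (Set.inter_subset_inter_left _ Set.inter_subset_left)).trans_lt (hsmall β hβ)⟩,
        Set.inter_subset_right⟩
    exact ⟨A, Set.mem_insert_of_mem _ hA, hAC.trans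
      (mk_le_mk_of_subset (Set.inter_subset_inter_right A Set.inter_subset_left))⟩

variable [LinearOrder ι] [WellFoundedLT ι]

theorem exists_isMaximalADIn_concentrated (hμ : μ.IsSingular)
    (ha : a ∈ MADSet μ) (hα : #α ≤ μ) (hp : ∀ i, #(p ⁻¹' {i}) = μ) (δ : ι) :
    ∃ ℱ : Set (Set α), p ⁻¹' {δ} ∈ ℱ ∧ #ℱ ≤ a + 1 ∧ IsMaximalADIn μ (concentrated μ p δ) ℱ := by
  obtain ⟨ℱ, hcard, hmax⟩ := exists_isMaximalADIn_initiallySmall hμ ha ((mk_set_le _).trans hα)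
    (q := (Set.Iio δ).restrictPreimage p) fun i => by
      rw [← hp i, ← mk_image_eq Subtype.val_injective]
      congr 2
      ext x
      simpa [Subtype.ext_iff] using fun h : p x = i => h ▸ i.2
  have hmax' := (IsMaximalADIn.image_iff Subtype.val_injective).2 hmax
  rw [image_image_initiallySmall_restrictPreimage] at hmax'
  exact ⟨_, Set.mem_insert _ _, mk_insert_le.trans (add_le_add_left (mk_image_le.trans hcard) 1),
    isMaximalADIn_insert_preimage_singleton hμ.aleph0_le (hp δ) hmax'⟩

theorem isMaximalADIn_iUnion_of_concentrated [OrderTop ι]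
    {ℱ : ι → Set (Set α)} (hℱ : ∀ δ, IsMaximalADIn μ (concentrated μ p δ) (ℱ δ)) :
    IsMaximalADIn μ {C | #C = μ} (⋃ δ, ℱ δ) := by
  have hlt {β δ} (hβδ : β < δ) {A B} (hA : A ∈ ℱ β) (hB : B ∈ ℱ δ) : #(B ∩ A : Set α) < μ :=
    (mk_le_mk_of_subset (Set.inter_subset_inter_right B ((hℱ β).subset hA).2.1)).trans_lt
      (((hℱ δ).subset hB).2.2 β hβδ)
  refine ⟨Set.iUnion_subset fun δ A hA => ((hℱ δ).subset hA).1, fun A hA B hB hAB => ?_,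
    fun C hC => ?_⟩
  · obtain ⟨β, hA⟩ := Set.mem_iUnion.1 hA
    obtain ⟨δ, hB⟩ := Set.mem_iUnion.1 hB
    rcases lt_trichotomy β δ with h | rfl | h
    · exact Set.inter_comm B A ▸ hlt h hA hB
    · exact (hℱ β).pairwise hA hB hAB
    · exact hlt h hB hA
  · let levels : Set ι := {δ | μ ≤ #(C ∩ p ⁻¹' Set.Iic δ : Set α)}
    have hne : levels.Nonempty := ⟨⊤, by simpa [levels] using hC.ge⟩
    obtain ⟨δ, hδ, hmin⟩ : ∃ δ ∈ levels, ∀ β < δ, β ∉ levels :=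
      ⟨_, wellFounded_lt.min_mem levels hne,
        fun β hβ hmem => wellFounded_lt.not_lt_min levels hmem hβ⟩
    obtain ⟨A, hA, hAC⟩ := (hℱ δ).exists_mem (C ∩ p ⁻¹' Set.Iic δ)
      ⟨((mk_le_mk_of_subset Set.inter_subset_left).trans hC.le).antisymm hδ,
        Set.inter_subset_right, fun β hβ => (mk_le_mk_of_subset
          (Set.inter_subset_inter_left _ Set.inter_subset_left)).trans_lt (not_le.1 (hmin β hβ))⟩
    exact ⟨A, Set.mem_iUnion.2 ⟨δ, hA⟩, hAC.trans
      (mk_le_mk_of_subset (Set.inter_subset_inter_right A Set.inter_subset_left))⟩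

end Concentrated

theorem mem_MADSet_of_le {μ a c : Cardinal.{u}} (hμ : μ.IsSingular) (ha : a ∈ MADSet μ)
    (hac : a ≤ c) (hcμ : c ≤ μ) : c ∈ MADSet μ := by
  have hκa : μ.ord.cof ≤ a := by obtain ⟨_, -, hcof, rfl⟩ := ha; exact hcof
  have hc : ℵ₀ ≤ c := (isRegular_cof (isSuccLimit_ord hμ.aleph0_le)).1.trans (hκa.trans hac)
  let ι := WithTop c.ord.ToType
  have hι : #ι = c := mk_option.trans (by rw [mk_ord_toType, add_one_eq hc])
  let p : ι × μ.out → ι := Prod.fst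
  have hα : #(ι × μ.out) = μ := by
    rw [mk_prod, lift_id, lift_id, hι, mk_out,
      mul_eq_right hμ.aleph0_le hcμ (aleph0_pos.trans_le hc).ne']
  have hp (i : ι) : #(p ⁻¹' {i}) = μ := (mk_preimage_fst_singleton i).trans (mk_out μ)
  choose ℱ hfiber hcard hmax using exists_isMaximalADIn_concentrated hμ ha hα.le hp
  have hle : #(⋃ δ, ℱ δ) ≤ c := by
    calc #(⋃ δ, ℱ δ) ≤ #ι * (a + 1) := mk_iUnion_le_of_le _ hcard
      _ ≤ c * c := mul_le_mul' hι.le ((add_le_add_left hac 1).trans (add_one_eq hc).le)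
      _ = c := mul_eq_self hc
  have hge : c ≤ #(⋃ δ, ℱ δ) := by
    have : Nonempty μ.out := mk_ne_zero_iff.1 (by simpa using hμ.pos.ne')
    rw [← hι, ← mk_range_eq _ (preimage_fst_singleton_injective (ι := ι) (α := μ.out))]
    exact mk_le_mk_of_subset (Set.range_subset_iff.2 fun δ => Set.mem_iUnion.2 ⟨δ, hfiber δ⟩)
  exact (mem_MADSet_iff hα).2 ⟨_, isMaximalADIn_iUnion_of_concentrated hmax,
    hκa.trans (hac.trans hge), hle.antisymm hge⟩

/-- If μ is singular with cf(μ) = κ and 𝔞_κ ≤ μ, then [𝔞_κ, μ] ⊆ MAD(μ). -/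
theorem stmt13 (μ : Cardinal.{u}) (hμ : ℵ₀ ≤ μ) (hsing : μ.ord.cof < μ)
    (ha : sInf (MADSet μ.ord.cof) ≤ μ) :
    ∀ c : Cardinal.{u}, sInf (MADSet μ.ord.cof) ≤ c → c ≤ μ → c ∈ MADSet μ := by
  intro c hac hcμ
  have hsingular : μ.IsSingular := ⟨hμ, hsing.ne⟩
  have hκ : ℵ₀ ≤ μ.ord.cof := (isRegular_cof (isSuccLimit_ord hμ)).1
  have hmem : sInf (MADSet μ.ord.cof) ∈ MADSet μ :=
    MADSet_cof_subset hsingular (csInf_mem (MADSet_nonempty hκ))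
  exact mem_MADSet_of_le hsingular hmem hac hcμ
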